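/- arXiv:1211.1738 — 3 statements merged into one kernel-verified Lean document; each statement's English description precedes it below -/
import Mathlib

section
/- Let X be a compact metric space, Λ a compact metric space, and w : Λ × X → X a continuous IFS. Then the following are equivalent: (1) for every σ ∈ Ω, lim_{n→∞} diam(w_{σ₁…σₙ}(X)) = 0; (2) for every ε > 0 there exists n₀ ∈ ℕ such that for all n ≥ n₀ and all σ ∈ Ω, diam(w_{σ₁…σₙ}(X)) < ε. -/
open Metric Set Filter Topology

/-- `seqComp w σ n = w_{σ₁} ∘ ⋯ ∘ w_{σₙ}` (with `σ i` denoting `σ_{i+1}`). -/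
def seqComp {Λ X : Type*} (w : Λ → X → X) (σ : ℕ → Λ) : ℕ → X → X
  | 0 => id
  | n + 1 => seqComp w σ n ∘ w (σ n)

theorem seqComp_continuous {Λ X : Type*} [TopologicalSpace Λ] [TopologicalSpace X]
    (w : Λ → X → X) (hw : Continuous fun p : Λ × X => w p.1 p.2) (n : ℕ) :
    Continuous fun p : (ℕ → Λ) × X => seqComp w p.1 n p.2 := by
  induction n with
  | zero => exact continuous_snd
  | succ n ih =>
    have h1 : Continuous fun p : (ℕ → Λ) × X => w (p.1 n) p.2 :=
      hw.comp (g := fun p : Λ × X => w p.1 p.2) (f := fun p : (ℕ → Λ) × X => (p.1 n, p.2))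
        (((continuous_apply n).comp continuous_fst).prodMk continuous_snd)
    exact ih.comp (continuous_fst.prodMk h1)

theorem stmt_0 {Λ X : Type*} [MetricSpace Λ] [CompactSpace Λ]
    [MetricSpace X] [CompactSpace X]
    (w : Λ → X → X) (hw : Continuous fun p : Λ × X => w p.1 p.2) :
    (∀ σ : ℕ → Λ,
        Tendsto (fun n => diam (Set.range (seqComp w σ n))) atTop (𝓝 0)) ↔
    (∀ ε > (0 : ℝ), ∃ n₀ : ℕ, ∀ n ≥ n₀, ∀ σ : ℕ → Λ,
        diam (Set.range (seqComp w σ n)) < ε) := by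
  constructor
  · intro h ε hε
    set K : ℕ → Set (ℕ → Λ) := fun n => Set.image Prod.fst
      {p : (ℕ → Λ) × (X × X) | ε / 2 ≤ dist (seqComp w p.1 n p.2.1) (seqComp w p.1 n p.2.2)} with hK
    have hcomp : ∀ n, IsCompact (K n) := by
      intro n
      refine IsCompact.image (IsClosed.isCompact ?_) continuous_fst
      refine isClosed_le continuous_const (Continuous.dist ?_ ?_)
      · exact (seqComp_continuous w hw n).comp
          (continuous_fst.prodMk (continuous_fst.comp continuous_snd))
      · exact (seqComp_continuous w hw n).comp
          (continuous_fst.prodMk (continuous_snd.comp continuous_snd))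
    have hmono : ∀ n, K (n + 1) ⊆ K n := by
      rintro n _ ⟨⟨σ, x, y⟩, hp, rfl⟩
      exact ⟨⟨σ, w (σ n) x, w (σ n) y⟩, hp, rfl⟩
    have hanti : Antitone K := antitone_nat_of_succ_le hmono
    have hex : ∃ n, ¬ (K n).Nonempty := by
      by_contra hcon
      push Not at hcon
      obtain ⟨σ, hσ⟩ := IsCompact.nonempty_iInter_of_sequence_nonempty_isCompact_isClosed
        K hmono hcon (hcomp 0) (fun n => (hcomp n).isClosed)
      rw [mem_iInter] at hσ
      obtain ⟨n, hn⟩ := ((h σ).eventually (gt_mem_nhds (half_pos hε))).exists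
      obtain ⟨⟨τ, x, y⟩, hp, hτ⟩ := hσ n
      obtain rfl : τ = σ := hτ
      have hb : Bornology.IsBounded (Set.range (seqComp w τ n)) :=
        isCompact_univ.isBounded.subset (subset_univ _)
      have := dist_le_diam_of_mem hb (mem_range_self x) (mem_range_self y)
      exact absurd hn (not_lt.mpr (le_trans hp this))
    obtain ⟨n₀, hn₀⟩ := hex
    refine ⟨n₀, fun n hn σ => ?_⟩
    refine lt_of_le_of_lt (diam_le_of_forall_dist_le (half_pos hε).le ?_) (half_lt_self hε)
    rintro _ ⟨x, rfl⟩ _ ⟨y, rfl⟩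
    by_contra hc
    exact hn₀ ⟨σ, hanti hn ⟨⟨σ, x, y⟩, (not_le.mp hc).le, rfl⟩⟩
  · intro h σ
    rw [Metric.tendsto_atTop]
    intro ε hε
    obtain ⟨n₀, hn₀⟩ := h ε hε
    refine ⟨n₀, fun n hn => ?_⟩
    rw [Real.dist_0_eq_abs, abs_of_nonneg diam_nonneg]
    exact hn₀ n hn σ
end

section
/- Let X be a compact metric space, Λ a compact metric space, and w : Λ × X → X a weakly hyperbolic IFS. Then the map Γ : Ω → X defined by Γ(σ) = lim_{n→∞} w_{σ₁…σₙ}(x) (for any x ∈ X; the limit exists and is independent of x) is continuous with respect to the product topology on Ω = Λ^ℕ. -/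
open Metric Set Filter Topology

theorem seqComp_continuous_aux {Λ X : Type*} [MetricSpace Λ] [MetricSpace X]
    (w : Λ → X → X) (hw : Continuous fun p : Λ × X => w p.1 p.2) (n : ℕ) :
    Continuous fun p : (ℕ → Λ) × X => seqComp w p.1 n p.2 := by
  induction n with
  | zero => exact continuous_snd
  | succ n ih =>
    have h1 : Continuous fun p : (ℕ → Λ) × X => (p.1 n, p.2) := by fun_prop
    exact ih.comp (continuous_fst.prodMk (hw.comp h1))

theorem seqComp_range_aux {Λ X : Type*} (w : Λ → X → X) (σ : ℕ → Λ) (n k : ℕ) :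
    Set.range (seqComp w σ (n + k)) ⊆ Set.range (seqComp w σ n) := by
  induction k with
  | zero => exact subset_rfl
  | succ k ih => exact (Set.range_comp_subset_range _ _).trans ih

theorem seqComp_limit_mem_aux {Λ X : Type*} [MetricSpace Λ] [MetricSpace X] [CompactSpace X]
    (w : Λ → X → X) (hw : Continuous fun p : Λ × X => w p.1 p.2) (σ : ℕ → Λ) (n : ℕ) (x y : X)
    (h : Tendsto (fun n => seqComp w σ n x) atTop (𝓝 y)) :
    y ∈ Set.range (seqComp w σ n) := by
  have hc : Continuous (seqComp w σ n) :=
    (seqComp_continuous_aux w hw n).comp (Continuous.prodMk_right σ)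
  refine (isCompact_range hc).isClosed.mem_of_tendsto h ?_
  filter_upwards [eventually_ge_atTop n] with m hm
  obtain ⟨k, rfl⟩ := Nat.exists_eq_add_of_le hm
  exact seqComp_range_aux w σ n k ⟨x, rfl⟩

/-- The limit map `Γ(σ) = lim_n w_{σ₁…σₙ}(x)` of a weakly hyperbolic IFS on a
compact phase space is continuous on `Ω = Λ^ℕ` with the product topology. -/
theorem stmt_3 {Λ X : Type*} [MetricSpace Λ] [CompactSpace Λ]
    [MetricSpace X] [CompactSpace X]
    (w : Λ → X → X) (hw : Continuous fun p : Λ × X => w p.1 p.2)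
    (hyp : ∀ σ : ℕ → Λ,
      Tendsto (fun n => diam (Set.range (seqComp w σ n))) atTop (𝓝 0))
    (Γ : (ℕ → Λ) → X)
    (hΓ : ∀ (σ : ℕ → Λ) (x : X),
      Tendsto (fun n => seqComp w σ n x) atTop (𝓝 (Γ σ))) :
    Continuous Γ := by
  rw [continuous_iff_continuousAt]
  intro σ
  rw [ContinuousAt, Metric.tendsto_nhds]
  intro ε hε
  obtain ⟨n, hn⟩ := ((hyp σ).eventually (gt_mem_nhds (half_pos hε))).exists
  have hF := seqComp_continuous_aux w hw n
  have hev : ∀ᶠ τ in 𝓝 σ, ∀ y ∈ (Set.univ : Set X),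
      dist (seqComp w τ n y) (seqComp w σ n y) < ε / 2 := by
    apply isCompact_univ.eventually_forall_of_forall_eventually
    intro y _
    have hg : Continuous fun p : (ℕ → Λ) × X =>
        dist (seqComp w p.1 n p.2) (seqComp w σ n p.2) :=
      hF.dist (hF.comp (continuous_const.prodMk continuous_snd))
    apply hg.continuousAt.eventually (gt_mem_nhds _)
    simpa using hε
  filter_upwards [hev] with τ hτ
  obtain ⟨y, hy⟩ := seqComp_limit_mem_aux w hw τ n (Γ σ) (Γ τ) (hΓ τ _)
  have hm := seqComp_limit_mem_aux w hw σ n (Γ σ) (Γ σ) (hΓ σ _)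
  have hd : dist (seqComp w σ n y) (Γ σ) ≤ diam (Set.range (seqComp w σ n)) :=
    Metric.dist_le_diam_of_mem (isCompact_univ.isBounded.subset (Set.subset_univ _)) ⟨y, rfl⟩ hm
  have ht := dist_triangle (Γ τ) (seqComp w σ n y) (Γ σ)
  have h1 := hτ y trivial
  rw [hy] at h1
  linarith
end

section
/- Let X be a nonempty compact metric space, Λ a compact metric space, and w : Λ × X → X a weakly hyperbolic IFS with global attractor K. Then for every σ ∈ Ω and every n ≥ 1 the map w_{σ₁…σₙ} = w_{σ₁} ∘ ⋯ ∘ w_{σₙ} : X → X has a unique fixed point, and K equals the closure of the set of all these fixed points (taken over all σ ∈ Ω and n ≥ 1). -/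
open Metric Set Filter Topology

/-- The Hutchinson–Barnsley operator on sets: `F(A) = w(Λ × A)`. -/
def HBset {Λ X : Type*} (w : Λ → X → X) (A : Set X) : Set X :=
  (fun p : Λ × X => w p.1 p.2) '' (Set.univ ×ˢ A)

theorem seqComp_congr {Λ X : Type*} (w : Λ → X → X) (σ τ : ℕ → Λ) (n : ℕ)
    (h : ∀ i < n, σ i = τ i) : seqComp w σ n = seqComp w τ n := by
  induction n with
  | zero => rfl
  | succ n ih =>
    simp only [seqComp]
    rw [ih (fun i hi => h i (by omega)), h n (by omega)]

theorem seqComp_add {Λ X : Type*} (w : Λ → X → X) (σ : ℕ → Λ) (m n : ℕ) :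
    seqComp w σ (m + n) = seqComp w σ m ∘ seqComp w (fun i => σ (m + i)) n := by
  induction n with
  | zero => rfl
  | succ n ih =>
    rw [← Nat.add_assoc]
    simp only [seqComp]
    rw [ih]
    rfl

theorem seqComp_periodic {Λ X : Type*} (w : Λ → X → X) (σ : ℕ → Λ) (n k : ℕ) :
    seqComp w (fun i => σ (i % n)) (n * k) = (seqComp w σ n)^[k] := by
  induction k with
  | zero => rfl
  | succ k ih =>
    rw [Nat.mul_succ, seqComp_add, ih, Function.iterate_succ]
    congr 1
    apply seqComp_congr
    intro i hi
    simp [Nat.mod_eq_of_lt hi]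

theorem mem_HBset_iterate {Λ X : Type*} [Nonempty Λ] (w : Λ → X → X) (n : ℕ) (B : Set X) (y : X) :
    y ∈ (HBset w)^[n] B ↔ ∃ σ : ℕ → Λ, ∃ b ∈ B, seqComp w σ n b = y := by
  induction n generalizing B with
  | zero => simp [seqComp]
  | succ n ih =>
    rw [Function.iterate_succ_apply, ih]
    constructor
    · rintro ⟨σ, b, ⟨⟨l, b'⟩, ⟨-, hb'⟩, rfl⟩, rfl⟩
      refine ⟨Function.update σ n l, b', hb', ?_⟩
      simp only [seqComp, Function.comp, Function.update_self]
      rw [seqComp_congr w (Function.update σ n l) σ n]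
      intro i hi
      exact Function.update_of_ne (by omega) _ _
    · rintro ⟨σ, b, hb, rfl⟩
      exact ⟨σ, w (σ n) b, ⟨(σ n, b), ⟨mem_univ _, hb⟩, rfl⟩, rfl⟩

theorem exists_fixed {X : Type*} [MetricSpace X] [CompactSpace X] [Nonempty X] (f : X → X)
    (hf : Continuous f) (hd : Tendsto (fun k => diam (Set.range f^[k])) atTop (𝓝 0)) :
    ∃! x, f x = x := by
  have key : ∀ x y, (∀ k, x ∈ Set.range f^[k]) → (∀ k, y ∈ Set.range f^[k]) → x = y := by
    intro x y hx hy
    apply dist_le_zero.1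
    exact ge_of_tendsto' hd fun k => dist_le_diam_of_mem isBounded_of_compactSpace (hx k) (hy k)
  obtain ⟨z, hz⟩ := IsCompact.nonempty_iInter_of_sequence_nonempty_isCompact_isClosed
    (fun k => Set.range f^[k])
    (fun k => by
      rintro _ ⟨x, rfl⟩
      exact ⟨f x, by rw [Function.iterate_succ_apply]⟩)
    (fun k => Set.range_nonempty _)
    (by exact isCompact_range (hf.iterate 0))
    (fun k => (isCompact_range (hf.iterate k)).isClosed)
  rw [Set.mem_iInter] at hz
  refine ⟨z, key _ _ ?_ hz, ?_⟩
  · intro k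
    obtain ⟨x, hx⟩ := hz k
    exact ⟨f x, by rw [← Function.iterate_succ_apply, Function.iterate_succ_apply', hx]⟩
  · intro y hy
    exact key _ _ (fun k => ⟨y, Function.iterate_fixed hy k⟩) hz

theorem unif_small {Λ X : Type*} [MetricSpace Λ] [CompactSpace Λ]
    [MetricSpace X] [CompactSpace X]
    (w : Λ → X → X) (hw : Continuous fun p : Λ × X => w p.1 p.2)
    (hyp : ∀ σ : ℕ → Λ,
      Tendsto (fun n => diam (Set.range (seqComp w σ n))) atTop (𝓝 0)) (ε : ℝ) (hε : 0 < ε) :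
    ∃ N, ∀ n ≥ N, ∀ σ x y, dist (seqComp w σ n x) (seqComp w σ n y) < ε := by
  let C : ℕ → Set (ℕ → Λ) := fun n =>
    {σ | ∃ x y, ε ≤ dist (seqComp w σ n x) (seqComp w σ n y)}
  have hmono : ∀ n, C (n + 1) ⊆ C n := by
    rintro n σ ⟨x, y, h⟩
    exact ⟨w (σ n) x, w (σ n) y, h⟩
  have hcpt : ∀ n, IsCompact (C n) := by
    intro n
    have hc : IsClosed {p : (ℕ → Λ) × X × X |
        ε ≤ dist (seqComp w p.1 n p.2.1) (seqComp w p.1 n p.2.2)} := by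
      have h := seqComp_continuous w hw n
      apply isClosed_le continuous_const
      exact (h.comp (continuous_fst.prodMk (continuous_fst.comp continuous_snd))).dist
        (h.comp (continuous_fst.prodMk (continuous_snd.comp continuous_snd)))
    convert hc.isCompact.image continuous_fst using 1
    ext σ
    simp [C]
  have hex : ∃ N, ¬ (C N).Nonempty := by
    by_contra! hcon
    obtain ⟨σ, hσ⟩ := IsCompact.nonempty_iInter_of_sequence_nonempty_isCompact_isClosed C hmono
      hcon (hcpt 0) (fun n => (hcpt n).isClosed)
    rw [Set.mem_iInter] at hσ
    have : ε ≤ 0 := ge_of_tendsto' (hyp σ) fun n => by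
      obtain ⟨x, y, h⟩ := hσ n
      exact h.trans (dist_le_diam_of_mem isBounded_of_compactSpace ⟨x, rfl⟩ ⟨y, rfl⟩)
    linarith
  obtain ⟨N, hN⟩ := hex
  refine ⟨N, fun n hn σ x y => ?_⟩
  by_contra! h
  exact hN ⟨σ, antitone_nat_of_succ_le hmono hn ⟨x, y, h⟩⟩

/-- For a weakly hyperbolic IFS on a nonempty compact metric space with global
attractor `K`, each finite composition `w_{σ₁…σₙ}` (`n ≥ 1`) has a unique fixed
point, and `K` is the closure of the set of all such fixed points. -/
theorem stmt_5 {Λ X : Type*} [MetricSpace Λ] [CompactSpace Λ] [Nonempty Λ]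
    [MetricSpace X] [CompactSpace X] [Nonempty X]
    (w : Λ → X → X) (hw : Continuous fun p : Λ × X => w p.1 p.2)
    (hyp : ∀ σ : ℕ → Λ,
      Tendsto (fun n => diam (Set.range (seqComp w σ n))) atTop (𝓝 0))
    (K : Set X) (hKne : K.Nonempty) (hKc : IsCompact K)
    (hKattr : ∀ B : Set X, B.Nonempty → IsCompact B →
      Tendsto (fun n => hausdorffDist ((HBset w)^[n] B) K) atTop (𝓝 0)) :
    (∀ σ : ℕ → Λ, ∀ n : ℕ, 1 ≤ n → ∃! x : X, seqComp w σ n x = x) ∧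
      K = closure {x : X | ∃ (σ : ℕ → Λ) (n : ℕ), 1 ≤ n ∧ seqComp w σ n x = x} := by
  have hfix : ∀ σ : ℕ → Λ, ∀ n : ℕ, 1 ≤ n → ∃! x : X, seqComp w σ n x = x := by
    intro σ n hn
    apply exists_fixed
    · exact (seqComp_continuous w hw n).comp (continuous_const.prodMk continuous_id)
    · have h := (hyp (fun i => σ (i % n))).comp
        (tendsto_id.const_mul_atTop' (show 0 < n by omega))
      refine h.congr fun k => ?_
      simp only [Function.comp, id]
      rw [seqComp_periodic]
  have hne : ∀ B : Set X, B.Nonempty → ∀ n, ((HBset w)^[n] B).Nonempty := by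
    rintro B ⟨b, hb⟩ n
    obtain ⟨l⟩ := ‹Nonempty Λ›
    have : Nonempty Λ := ⟨l⟩
    exact ⟨_, (mem_HBset_iterate w n B _).2 ⟨fun _ => l, b, hb, rfl⟩⟩
  have hfin : ∀ B : Set X, B.Nonempty → ∀ n, hausdorffEDist ((HBset w)^[n] B) K ≠ ⊤ :=
    fun B hB n => hausdorffEDist_ne_top_of_nonempty_of_bounded (hne B hB n) hKne
      isBounded_of_compactSpace isBounded_of_compactSpace
  refine ⟨hfix, Set.Subset.antisymm ?_ ?_⟩
  · intro x hx
    rw [Metric.mem_closure_iff]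
    intro ε hε
    obtain ⟨N, hN⟩ := unif_small w hw hyp (ε / 2) (half_pos hε)
    have h1 := (hKattr univ univ_nonempty isCompact_univ).eventually_lt_const (half_pos hε)
    obtain ⟨n, hn, hnN⟩ := (h1.and (eventually_ge_atTop (N + 1))).exists
    obtain ⟨y, hy, hxy⟩ := exists_dist_lt_of_hausdorffDist_lt' hx hn
      (hfin univ univ_nonempty n)
    obtain ⟨σ, b, -, rfl⟩ := (mem_HBset_iterate w n univ y).1 hy
    obtain ⟨p, hp, -⟩ := hfix σ n (by omega)
    refine ⟨p, ⟨σ, n, by omega, hp⟩, ?_⟩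
    have h2 := hN n (by omega) σ b p
    have hp' : seqComp w σ n p = p := hp
    rw [hp'] at h2
    have h3 := dist_triangle x (seqComp w σ n b) p
    have h4 := dist_comm x (seqComp w σ n b)
    linarith
  · apply closure_minimal _ hKc.isClosed
    rintro x ⟨σ, n, hn, hx⟩
    rw [hKc.isClosed.mem_iff_infDist_zero hKne]
    have ht := (hKattr {x} (singleton_nonempty x) isCompact_singleton).comp
      (tendsto_id.const_mul_atTop' (show 0 < n by omega))
    refine le_antisymm (ge_of_tendsto' ht fun k => ?_) infDist_nonneg
    apply infDist_le_hausdorffDist_of_mem _ (hfin _ (singleton_nonempty x) _)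
    refine (mem_HBset_iterate w _ _ _).2 ⟨fun i => σ (i % n), x, rfl, ?_⟩
    simp only [id]
    rw [seqComp_periodic]
    exact Function.iterate_fixed hx k
end
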